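/- Let $-1<\alpha<\infty$ and $c>1$. For $z\in\mathbb{D}$ define $g_z(\zeta)=(1-|z|^2)^{(\alpha+2)c}/(1-\bar z\zeta)^{(\alpha+2)c}$, and suppose $\mu$ is a positive Borel measure on $\mathbb{D}$ that is a Carleson measure for $L^1_a(\omega_\alpha)$ (i.e. $\sup_w\mu(D(w,r))(1-|w|^2)^{-(\alpha+2)}<\infty$). Then for each fixed $\zeta\in\mathbb{D}$, $|S_{\mu,\alpha}(g_z)(\zeta)|\le C\big((1-|z|)/(1-|\zeta|)\big)^{\alpha+2}$ with $C$ independent of $z,\zeta$; in particular $S_{\mu,\alpha}(g_z)(\zeta)\to 0$ as $|z|\to 1^-$. -/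

import Mathlib

open MeasureTheory Metric Filter Complex Set
open scoped ENNReal NNReal Topology

/-- The normalized area measure on `ℂ`. -/
noncomputable def dA : Measure ℂ := (ENNReal.ofReal Real.pi)⁻¹ • volume

/-- The standard weight `ω_a(z) = (1+a)(1-|z|²)^a`. -/
noncomputable def stdW (a : ℝ) (z : ℂ) : ℝ := (1 + a) * (1 - ‖z‖ ^ 2) ^ a

/-- The weighted `L^p` (quasi-)norm over the unit disk. -/
noncomputable def wnorm (p a : ℝ) (f : ℂ → ℂ) : ℝ≥0∞ :=
  (∫⁻ z in ball (0 : ℂ) 1, ENNReal.ofReal (‖f z‖ ^ p * stdW a z) ∂dA) ^ (1 / p)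

/-- The pseudohyperbolic disk `D(z,r)`. -/
def pD (z : ℂ) (r : ℝ) : Set ℂ :=
  {w | w ∈ ball (0 : ℂ) 1 ∧ ‖(z - w) / (1 - (starRingEnd ℂ) z * w)‖ < r}

/-- The Toeplitz operator `T_{μ,b}`. -/
noncomputable def Toep (μ : Measure ℂ) (b : ℝ) (f : ℂ → ℂ) (z : ℂ) : ℂ :=
  ∫ w in ball (0 : ℂ) 1, f w / (1 - z * (starRingEnd ℂ) w) ^ (((2 + b : ℝ)) : ℂ) ∂μ

/-- The Bloch norm. -/
noncomputable def blochNorm (g : ℂ → ℂ) : ℝ :=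
  ‖g 0‖ + sSup ((fun z => (1 - ‖z‖ ^ 2) * ‖deriv g z‖) '' ball (0 : ℂ) 1)

/-- Membership in the Bloch space. -/
def MemBloch (g : ℂ → ℂ) : Prop :=
  DifferentiableOn ℂ g (ball (0 : ℂ) 1) ∧
    BddAbove ((fun z => (1 - ‖z‖ ^ 2) * ‖deriv g z‖) '' ball (0 : ℂ) 1)

/-- The test function `g_z`. -/
noncomputable def gztest (a c : ℝ) (z ζ : ℂ) : ℂ :=
  (((1 - ‖z‖ ^ 2 : ℝ)) : ℂ) ^ ((((a + 2) * c : ℝ)) : ℂ) /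
    (1 - (starRingEnd ℂ) z * ζ) ^ ((((a + 2) * c : ℝ)) : ℂ)

/-!
Write `b = a + 2`. Since `|1 - ζ ū| ≥ 1 - |ζ|` on the disk, it is enough to show that
`∫ ((1 - |z|²) / |1 - z̄ u|)^{bc} dμ(u) ≤ M (1 - |z|)^b` with `M` independent of `z`. The base is
at most `2`, so the exponent may be lowered to `b (2 - t)`, where `2 - t = min c 2` and
`0 ≤ t < 1` (`norm_integrand_le`).

Let `φ_z` be the Möbius involution exchanging `0` and `z` (`mob`). With `v = φ_z(u)` the base
equals `|1 - z̄ v|`. A hyperbolic lattice `v_n` (`lat`) is chosen with points on the circles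
`|v| = 1 - q^j`, angularly spaced by a multiple of `q^j` and aligned with the argument of `z`.
Since `φ_z` preserves the pseudohyperbolic distance, the disks `D(φ_z(v_n), r)` cover the unit
disk (`exists_lat_mob`). By the Carleson condition and
`1 - |φ_z(v)|² = (1 - |z|²) (1 - |v|²) / |1 - z̄ v|²`, the part of the integral charged to `v_n`
is at most a constant times `(1 - |z|)^b (1 - |v_n|)^b |1 - z̄ v_n|^{-bt}`.

It remains to bound `∑ (1 - |v_n|)^b |1 - z̄ v_n|^{-bt}` uniformly in `z`. The denominator
`|1 - z̄ v_n|` dominates both the height `q^j` and the angular distance `(k + 1) q^j` of `v_n`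
from `z` (`succ_mul_stp_le`). The first bound is used for the power `(b - 1) t < b - 1` and the
second for the power `t < 1` (`term_le`). The angular sums then cost only `q^{-j}`
(`level_sum_le`), and the radial sum is geometric with ratio `q^{(b - 1)(1 - t)} < 1`
(`lintegral_test_le`).
-/

/-! ### The Möbius involutions of the disk -/

/-- The Möbius involution `φ_z(u) = (z - u) / (1 - z̄ u)` of the unit disk. -/
noncomputable def mob (z u : ℂ) : ℂ := (z - u) / (1 - (starRingEnd ℂ) z * u)

lemma one_sub_norm_le {z u : ℂ} (hu : ‖u‖ ≤ 1) :
    1 - ‖z‖ ≤ ‖1 - (starRingEnd ℂ) z * u‖ := by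
  have h1 := norm_sub_norm_le (1 : ℂ) ((starRingEnd ℂ) z * u)
  rw [norm_one, norm_mul, RCLike.norm_conj] at h1
  nlinarith [norm_nonneg z]

lemma one_sub_conj_mul_ne {z u : ℂ} (hz : ‖z‖ < 1) (hu : ‖u‖ ≤ 1) :
    1 - (starRingEnd ℂ) z * u ≠ 0 := by
  have := one_sub_norm_le (z := z) hu
  exact norm_pos_iff.1 (by linarith)

lemma norm_one_sub_conj_mul_le {z u : ℂ} (hz : ‖z‖ < 1) (hu : ‖u‖ ≤ 1) :
    ‖1 - (starRingEnd ℂ) z * u‖ ≤ 2 := by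
  have h1 := norm_sub_le (1 : ℂ) ((starRingEnd ℂ) z * u)
  rw [norm_one, norm_mul, RCLike.norm_conj] at h1
  nlinarith [norm_nonneg z, norm_nonneg u]

lemma conj_mul_self_ne {z : ℂ} (hz : ‖z‖ < 1) : 1 - (starRingEnd ℂ) z * z ≠ 0 :=
  one_sub_conj_mul_ne hz hz.le

lemma one_sub_conj_mul_mob {z u : ℂ} (hz : ‖z‖ < 1) (hu : ‖u‖ < 1) :
    1 - (starRingEnd ℂ) z * mob z u =
      (1 - (starRingEnd ℂ) z * z) / (1 - (starRingEnd ℂ) z * u) := by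
  have h := one_sub_conj_mul_ne hz hu.le
  unfold mob
  field_simp
  ring

lemma mob_mob {z u : ℂ} (hz : ‖z‖ < 1) (hu : ‖u‖ < 1) : mob z (mob z u) = u := by
  have h := one_sub_conj_mul_ne hz hu.le
  have h' := conj_mul_self_ne hz
  have h2 := one_sub_conj_mul_mob hz hu
  rw [mob, h2, div_eq_iff (div_ne_zero h' h), mob, ← mul_div_assoc, eq_div_iff h, sub_mul,
    div_mul_cancel₀ _ h]
  ring

lemma one_sub_conj_mob_mul_mob {z u v : ℂ} (hz : ‖z‖ < 1) (hu : ‖u‖ < 1) (hv : ‖v‖ < 1) :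
    1 - (starRingEnd ℂ) (mob z u) * mob z v =
      (1 - (starRingEnd ℂ) z * z) * (1 - (starRingEnd ℂ) u * v) /
        ((starRingEnd ℂ) (1 - (starRingEnd ℂ) z * u) * (1 - (starRingEnd ℂ) z * v)) := by
  have h := one_sub_conj_mul_ne hz hu.le
  have h' := one_sub_conj_mul_ne hz hv.le
  have h2 : (starRingEnd ℂ) (1 - (starRingEnd ℂ) z * u) ≠ 0 := by
    simpa only [ne_eq, map_eq_zero] using h
  unfold mob
  rw [map_div₀]
  rw [div_mul_div_comm, eq_div_iff (mul_ne_zero h2 h'), sub_mul, div_mul_cancel₀ _ (mul_ne_zero h2 h')]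
  simp only [map_sub, map_one, map_mul, Complex.conj_conj]
  ring

lemma norm_one_sub_conj_mul_self {z : ℂ} (hz : ‖z‖ < 1) :
    ‖1 - (starRingEnd ℂ) z * z‖ = 1 - ‖z‖ ^ 2 := by
  rw [Complex.conj_mul', ← Complex.ofReal_pow, ← Complex.ofReal_one, ← Complex.ofReal_sub,
    Complex.norm_real, Real.norm_of_nonneg]
  nlinarith [norm_nonneg z]

lemma one_sub_norm_mob_sq {z u : ℂ} (hz : ‖z‖ < 1) (hu : ‖u‖ < 1) :
    1 - ‖mob z u‖ ^ 2 =
      (1 - ‖z‖ ^ 2) * (1 - ‖u‖ ^ 2) / ‖1 - (starRingEnd ℂ) z * u‖ ^ 2 := by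
  have h := one_sub_conj_mob_mul_mob hz hu hu
  rw [Complex.conj_mul', Complex.conj_mul', Complex.conj_mul', Complex.conj_mul'] at h
  exact_mod_cast h

lemma norm_mob_lt {z u : ℂ} (hz : ‖z‖ < 1) (hu : ‖u‖ < 1) : ‖mob z u‖ < 1 := by
  have h := one_sub_norm_mob_sq hz hu
  have h1 : 0 < ‖1 - (starRingEnd ℂ) z * u‖ := norm_pos_iff.2 (one_sub_conj_mul_ne hz hu.le)
  have h2 : 0 < 1 - ‖z‖ ^ 2 := by nlinarith [norm_nonneg z]
  have h3 : 0 < 1 - ‖u‖ ^ 2 := by nlinarith [norm_nonneg u]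
  have h4 : 0 < 1 - ‖mob z u‖ ^ 2 := by rw [h]; positivity
  nlinarith [norm_nonneg (mob z u)]

/-- Möbius invariance of the pseudohyperbolic distance. -/
lemma norm_mob_mob {z u v : ℂ} (hz : ‖z‖ < 1) (hu : ‖u‖ < 1) (hv : ‖v‖ < 1) :
    ‖mob (mob z u) (mob z v)‖ = ‖mob u v‖ := by
  have h := one_sub_conj_mul_ne hz hu.le
  have h' := one_sub_conj_mul_ne hz hv.le
  have h0 := conj_mul_self_ne hz
  have hd : mob z u - mob z v = (1 - (starRingEnd ℂ) z * z) * (v - u) /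
      ((1 - (starRingEnd ℂ) z * u) * (1 - (starRingEnd ℂ) z * v)) := by
    unfold mob
    rw [div_sub_div _ _ h h']
    congr 1
    ring
  rw [mob, one_sub_conj_mob_mul_mob hz hu hv, hd, mob]
  simp only [norm_div, norm_mul, RCLike.norm_conj]
  rw [norm_sub_rev v u]
  have n1 := norm_pos_iff.2 h
  have n2 := norm_pos_iff.2 h'
  have n3 := norm_pos_iff.2 h0
  have n4 := norm_pos_iff.2 (one_sub_conj_mul_ne hu hv.le)
  field_simp

lemma measurableSet_pD (w : ℂ) (r : ℝ) : MeasurableSet (pD w r) := by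
  have h : Measurable fun u : ℂ => ‖(w - u) / (1 - (starRingEnd ℂ) w * u)‖ := by fun_prop
  exact measurableSet_ball.inter (measurableSet_lt h measurable_const)

/-! ### A hyperbolic lattice -/

/-- The angular step of the lattice at level `j`. -/
noncomputable def stp (r : ℝ) (j : ℕ) : ℝ := r / 2 * (1 - r / 2) ^ j

/-- The number of angles of each sign at level `j` of the lattice. -/
noncomputable def cnt (r : ℝ) (j : ℕ) : ℕ := ⌊Real.pi / stp r j⌋₊ + 1

/-- The sign `±1` encoded by a Boolean. -/
def sgn (s : Bool) : ℝ := if s then 1 else -1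

/-- The lattice point on the circle of radius `1 - (1 - r/2)^j`, at the angle `± k · stp r j`
measured from the unimodular direction `e`. -/
noncomputable def lat (r : ℝ) (e : ℂ) (j k : ℕ) (s : Bool) : ℂ :=
  e * (((1 - (1 - r / 2) ^ j : ℝ) : ℂ) * exp (((sgn s * (k * stp r j) : ℝ) : ℂ) * I))

lemma norm_exp_sub_exp_le (x y : ℝ) : ‖exp ((x : ℂ) * I) - exp ((y : ℂ) * I)‖ ≤ |x - y| := by
  have h : exp ((x : ℂ) * I) - exp ((y : ℂ) * I) =
      exp ((y : ℂ) * I) * (exp (I * ((x - y : ℝ) : ℂ)) - 1) := by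
    rw [mul_sub, ← Complex.exp_add, mul_one]
    congr 2
    push_cast
    ring
  rw [h, norm_mul, Complex.norm_exp_ofReal_mul_I, one_mul]
  exact Real.norm_exp_I_mul_ofReal_sub_one_le

lemma norm_lat {r : ℝ} (hr : r ∈ Set.Ioo (0 : ℝ) 1) {e : ℂ} (he : ‖e‖ = 1) (j k : ℕ) (s : Bool) :
    ‖lat r e j k s‖ = 1 - (1 - r / 2) ^ j := by
  have : (1 - r / 2) ^ j ≤ 1 := pow_le_one₀ (by linarith [hr.2]) (by linarith [hr.1])
  rw [lat, norm_mul, he, norm_mul, Complex.norm_exp_ofReal_mul_I, Complex.norm_real,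
    Real.norm_of_nonneg (by linarith)]
  ring

lemma stp_pos {r : ℝ} (hr : r ∈ Set.Ioo (0 : ℝ) 1) (j : ℕ) : 0 < stp r j :=
  mul_pos (by linarith [hr.1]) (pow_pos (by linarith [hr.2]) _)

/-- The lattice points are dense at the hyperbolic scale. -/
lemma exists_lat {r : ℝ} (hr : r ∈ Set.Ioo (0 : ℝ) 1) {e : ℂ} (he : ‖e‖ = 1) {v : ℂ}
    (hv : ‖v‖ < 1) :
    ∃ j k s, k < cnt r j ∧ ‖lat r e j k s - v‖ < r * (1 - r / 2) ^ j := by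
  have he0 : e ≠ 0 := norm_pos_iff.1 (by linarith)
  set φ := arg (v / e) with hφ
  have hvn : ‖v / e‖ = ‖v‖ := by rw [norm_div, he, div_one]
  have hv' : v = e * ((‖v‖ : ℂ) * exp ((φ : ℂ) * I)) := by
    rw [← hvn, hφ, Complex.norm_mul_exp_arg_mul_I]
    field_simp
  obtain ⟨j, hj1, hj2⟩ := exists_nat_pow_near_of_lt_one (x := 1 - ‖v‖) (y := 1 - r / 2)
    (by linarith) (by linarith [norm_nonneg v]) (by linarith [hr.2]) (by linarith [hr.1])
  have hs := stp_pos hr j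
  have hQ1 : (1 - r / 2) ^ j ≤ 1 := pow_le_one₀ (by linarith [hr.2]) (by linarith [hr.1])
  obtain ⟨s, hsφ⟩ : ∃ s, φ = sgn s * |φ| := by
    rcases le_total 0 φ with h | h
    · exact ⟨true, by simp [sgn, abs_of_nonneg h]⟩
    · exact ⟨false, by simp [sgn, abs_of_nonpos h]⟩
  have hsg : |sgn s| = 1 := by cases s <;> simp [sgn]
  refine ⟨j, ⌊|φ| / stp r j⌋₊, s, ?_, ?_⟩
  · exact Nat.lt_succ_of_le (Nat.floor_le_floor (by gcongr; exact abs_arg_le_pi _))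
  set k := ⌊|φ| / stp r j⌋₊
  have hk1 : k * stp r j ≤ |φ| := by
    rw [← le_div_iff₀ hs]
    exact Nat.floor_le (by positivity)
  have hk2 : |φ| < (k + 1) * stp r j := by
    rw [← div_lt_iff₀ hs]
    exact Nat.lt_floor_add_one _
  have hang : |sgn s * (k * stp r j) - φ| ≤ stp r j := by
    rw [hsφ, ← mul_sub, abs_mul, hsg, one_mul, abs_le]
    constructor <;> linarith
  set ψ := sgn s * (k * stp r j) with hψ
  have hsplit : lat r e j k s - v =
      e * (((1 - (1 - r / 2) ^ j : ℝ) : ℂ) * (exp ((ψ : ℂ) * I) - exp ((φ : ℂ) * I)) +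
        ((1 - (1 - r / 2) ^ j - ‖v‖ : ℝ) : ℂ) * exp ((φ : ℂ) * I)) := by
    nth_rewrite 1 [hv']
    rw [lat, ← hψ]
    push_cast
    ring
  rw [hsplit, norm_mul, he, one_mul]
  refine (norm_add_le _ _).trans_lt ?_
  rw [norm_mul, norm_mul, Complex.norm_exp_ofReal_mul_I, Complex.norm_real, Complex.norm_real,
    Real.norm_of_nonneg (by linarith : (0 : ℝ) ≤ 1 - (1 - r / 2) ^ j), Real.norm_eq_abs]
  have h1 := (norm_exp_sub_exp_le ψ φ).trans hang
  have h2 : |1 - (1 - r / 2) ^ j - ‖v‖| < r / 2 * (1 - r / 2) ^ j := by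
    rw [pow_succ] at hj1
    rw [abs_lt]
    constructor <;> nlinarith
  have h3 : (0 : ℝ) ≤ (1 - r / 2) ^ j := pow_nonneg (by linarith [hr.2]) _
  have h4 := norm_nonneg (exp ((ψ : ℂ) * I) - exp ((φ : ℂ) * I))
  have h5 : stp r j = r / 2 * (1 - r / 2) ^ j := rfl
  nlinarith

/-- For `|φ| ≤ π` and `0 ≤ τ ≤ 1`, the distance from `1` to `τ e^{iφ}` is at least `|φ| / π`. -/
lemma abs_le_pi_mul_norm {τ φ : ℝ} (h0 : 0 ≤ τ) (h1 : τ ≤ 1) (hφ : |φ| ≤ Real.pi) :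
    |φ| ≤ Real.pi * ‖1 - (τ : ℂ) * exp ((φ : ℂ) * I)‖ := by
  have ha : ‖exp (I * (φ : ℂ)) - 1‖ = ‖2 * Real.sin (φ / 2)‖ :=
    Complex.norm_exp_I_mul_ofReal_sub_one φ
  have hb : 2 / Real.pi * (|φ| / 2) ≤ Real.sin (|φ| / 2) :=
    Real.mul_le_sin (by positivity) (by linarith)
  have hc : ‖2 * Real.sin (φ / 2)‖ = 2 * Real.sin (|φ| / 2) := by
    have hn : 0 ≤ Real.sin (|φ| / 2) := le_trans (by positivity) hb
    rcases abs_choice φ with h | h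
    · rw [h] at hn ⊢
      rw [Real.norm_of_nonneg (by positivity)]
    · rw [h] at hn ⊢
      rw [neg_div, Real.sin_neg] at hn ⊢
      rw [Real.norm_of_nonpos (by linarith)]
      ring
  have hd : ‖exp ((φ : ℂ) * I) - 1‖ ≤ 2 * ‖1 - (τ : ℂ) * exp ((φ : ℂ) * I)‖ := by
    have e1 : exp ((φ : ℂ) * I) - 1 =
        -(1 - (τ : ℂ) * exp ((φ : ℂ) * I)) + ((1 - τ : ℝ) : ℂ) * exp ((φ : ℂ) * I) := by
      push_cast
      ring
    have e2 := norm_sub_norm_le (1 : ℂ) ((τ : ℂ) * exp ((φ : ℂ) * I))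
    rw [norm_one, norm_mul, Complex.norm_exp_ofReal_mul_I, Complex.norm_real,
      Real.norm_of_nonneg h0] at e2
    rw [e1]
    refine (norm_add_le _ _).trans ?_
    rw [norm_neg, norm_mul (((1 - τ : ℝ) : ℂ)), Complex.norm_exp_ofReal_mul_I, Complex.norm_real,
      Real.norm_of_nonneg (by linarith)]
    linarith
  rw [mul_comm I, hc] at ha
  have hp := Real.pi_pos
  have : |φ| / Real.pi ≤ ‖1 - (τ : ℂ) * exp ((φ : ℂ) * I)‖ := by
    have : 2 / Real.pi * (|φ| / 2) = |φ| / Real.pi := by field_simp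
    linarith
  rwa [div_le_iff₀' hp] at this

/-- Lattice points aligned with `z` satisfy `|1 - z̄ v| ≳ (k + 1) stp r j`. -/
lemma succ_mul_stp_le {r : ℝ} (hr : r ∈ Set.Ioo (0 : ℝ) 1) {z : ℂ} (hz : ‖z‖ < 1) {j k : ℕ}
    (hk : k < cnt r j) (s : Bool) :
    (k + 1) * stp r j ≤
      5 * ‖1 - (starRingEnd ℂ) z * lat r (exp ((arg z : ℂ) * I)) j k s‖ := by
  have hs := stp_pos hr j
  have hQ1 : (1 - r / 2) ^ j ≤ 1 := pow_le_one₀ (by linarith [hr.2]) (by linarith [hr.1])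
  have hQ0 : 0 < (1 - r / 2) ^ j := pow_pos (by linarith [hr.2]) _
  have he : ‖exp ((arg z : ℂ) * I)‖ = 1 := Complex.norm_exp_ofReal_mul_I _
  have hY := one_sub_norm_le (z := lat r (exp ((arg z : ℂ) * I)) j k s) (u := z) hz.le
  have hconj : ‖1 - (starRingEnd ℂ) (lat r (exp ((arg z : ℂ) * I)) j k s) * z‖ =
      ‖1 - (starRingEnd ℂ) z * lat r (exp ((arg z : ℂ) * I)) j k s‖ := by
    rw [← RCLike.norm_conj]
    congr 1
    simp only [map_sub, map_one, map_mul, Complex.conj_conj]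
    ring
  rw [hconj, norm_lat hr he] at hY
  have hzz : (starRingEnd ℂ) z * exp ((arg z : ℂ) * I) = (‖z‖ : ℂ) := by
    nth_rewrite 1 [← Complex.norm_mul_exp_arg_mul_I z]
    rw [map_mul, Complex.conj_ofReal, mul_assoc, Complex.conj_mul', he]
    simp
  have heq : (starRingEnd ℂ) z * lat r (exp ((arg z : ℂ) * I)) j k s =
      ((‖z‖ * (1 - (1 - r / 2) ^ j) : ℝ) : ℂ) *
        exp (((sgn s * (k * stp r j) : ℝ) : ℂ) * I) := by
    rw [lat, ← mul_assoc, hzz]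
    push_cast
    ring
  have hks : k * stp r j ≤ Real.pi := by
    rw [← le_div_iff₀ hs]
    exact (Nat.le_floor_iff (by positivity)).1 (Nat.lt_succ_iff.1 hk)
  have habs : |sgn s * (k * stp r j)| = k * stp r j := by
    have hsg : |sgn s| = 1 := by cases s <;> simp [sgn]
    rw [abs_mul, hsg, one_mul, abs_of_nonneg (by positivity)]
  have hmain := abs_le_pi_mul_norm (τ := ‖z‖ * (1 - (1 - r / 2) ^ j))
    (φ := sgn s * (k * stp r j)) (mul_nonneg (norm_nonneg z) (by linarith))
    (by nlinarith [norm_nonneg z]) (by rw [habs]; exact hks)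
  rw [habs, ← heq] at hmain
  have h5 : stp r j = r / 2 * (1 - r / 2) ^ j := rfl
  have h6 : stp r j ≤ (1 - r / 2) ^ j := by nlinarith [hr.2]
  nlinarith [Real.pi_lt_four, norm_nonneg (1 - (starRingEnd ℂ) z *
    lat r (exp ((arg z : ℂ) * I)) j k s)]

/-! ### Summation over the lattice -/

lemma sum_rpow_le {t : ℝ} (ht0 : 0 ≤ t) (ht1 : t < 1) (N : ℕ) :
    ∑ k ∈ Finset.range N, ((k : ℝ) + 1) ^ (-t) ≤ (N : ℝ) ^ (1 - t) / (1 - t) := by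
  have h1t : 0 < 1 - t := by linarith
  induction N with
  | zero => simp [Real.zero_rpow h1t.ne']
  | succ n ih =>
    rw [Finset.sum_range_succ]
    refine (add_le_add_left ih _).trans ?_
    have hn : (0 : ℝ) < n + 1 := by positivity
    have hb : ((n : ℝ) / (n + 1)) ^ (1 - t) ≤ 1 - (1 - t) / (n + 1) := by
      have := rpow_one_add_le_one_add_mul_self (s := -(1 / ((n : ℝ) + 1))) (p := 1 - t)
        (by rw [neg_le_neg_iff, div_le_one hn]; linarith [(Nat.cast_nonneg n : (0 : ℝ) ≤ n)])
        h1t.le (by linarith)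
      have e : 1 + -(1 / ((n : ℝ) + 1)) = n / (n + 1) := by field_simp; ring
      rw [e] at this
      refine this.trans_eq ?_
      ring
    rw [Real.div_rpow (by positivity) hn.le, div_le_iff₀ (by positivity)] at hb
    rw [← le_sub_iff_add_le, ← sub_nonneg]
    have e2 : ((n : ℝ) + 1) ^ (-t) = ((n : ℝ) + 1) ^ (1 - t) / (n + 1) := by
      rw [← Real.rpow_sub_one hn.ne']
      congr 1
      ring
    push_cast
    rw [e2, show ((n : ℝ) + 1) ^ (1 - t) / (1 - t) - ((n : ℝ) + 1) ^ (1 - t) / (n + 1) -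
      (n : ℝ) ^ (1 - t) / (1 - t) = ((1 - (1 - t) / (n + 1)) * ((n : ℝ) + 1) ^ (1 - t) -
        (n : ℝ) ^ (1 - t)) / (1 - t) by field_simp]
    exact div_nonneg (by linarith) h1t.le

/-- The contribution of one lattice disk: the bound `(2Y)^{b(2-t)}` of the test function there,
times the Carleson bound of its mass. Here `Y = |1 - z̄ v|`, `Q = 1 - |v|`, `d = 1 - |z|`, and
`Y^{-bt}` is split as `Y^{-(b-1)t} Y^{-t}`, so that the radial and the angular sums both
converge. -/
lemma term_le {b t η d Q Y κ : ℝ} (hb : 1 < b) (ht0 : 0 ≤ t) (hη : 0 < η) (hd : 0 ≤ d)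
    (hQ : 0 < Q) (hQY : Q ≤ Y) (hκ : 0 < κ) (hκY : κ * (η * Q) ≤ 5 * Y) :
    (2 * Y) ^ (b * (2 - t)) * (4 * d * Q / Y ^ 2) ^ b ≤
      2 ^ (b * (2 - t)) * 4 ^ b * (η / 5) ^ (-t) * d ^ b * Q ^ (b * (1 - t)) * κ ^ (-t) := by
  have hY : 0 < Y := hQ.trans_le hQY
  have e1 : (2 * Y) ^ (b * (2 - t)) * (4 * d * Q / Y ^ 2) ^ b =
      2 ^ (b * (2 - t)) * 4 ^ b * d ^ b * Q ^ b * (Y ^ (-((b - 1) * t)) * Y ^ (-t)) := by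
    rw [Real.mul_rpow (by norm_num) hY.le, Real.div_rpow (by positivity) (by positivity),
      Real.mul_rpow (by positivity) hQ.le, Real.mul_rpow (by norm_num) hd,
      ← Real.rpow_natCast Y 2, ← Real.rpow_mul hY.le, ← Real.rpow_add hY]
    have : Y ^ (-((b - 1) * t) + -t) = Y ^ (b * (2 - t)) / Y ^ (((2 : ℕ) : ℝ) * b) := by
      rw [← Real.rpow_sub hY]
      congr 1
      push_cast
      ring
    rw [this]
    ring
  have h1 : Y ^ (-((b - 1) * t)) ≤ Q ^ (-((b - 1) * t)) :=
    Real.rpow_le_rpow_of_nonpos hQ hQY (by nlinarith)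
  have h2 : Y ^ (-t) ≤ (κ * (η * Q) / 5) ^ (-t) :=
    Real.rpow_le_rpow_of_nonpos (by positivity) (by linarith) (by linarith)
  have e2 : (κ * (η * Q) / 5) ^ (-t) = (η / 5) ^ (-t) * Q ^ (-t) * κ ^ (-t) := by
    rw [show κ * (η * Q) / 5 = η / 5 * Q * κ by ring, Real.mul_rpow (by positivity) hκ.le,
      Real.mul_rpow (by positivity) hQ.le]
  have e3 : Q ^ (b * (1 - t)) = Q ^ b * Q ^ (-((b - 1) * t)) * Q ^ (-t) := by
    rw [← Real.rpow_add hQ, ← Real.rpow_add hQ]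
    congr 1
    ring
  rw [e1, e3]
  calc _ ≤ 2 ^ (b * (2 - t)) * 4 ^ b * d ^ b * Q ^ b *
        (Q ^ (-((b - 1) * t)) * ((η / 5) ^ (-t) * Q ^ (-t) * κ ^ (-t))) := by
        rw [e2] at h2
        gcongr
    _ = _ := by ring


/-- The sum over one level of the lattice. -/
lemma level_sum_le {r b t : ℝ} (hr : r ∈ Set.Ioo (0 : ℝ) 1) (ht0 : 0 ≤ t) (ht1 : t < 1) (j : ℕ) :
    ((1 - r / 2) ^ j) ^ (b * (1 - t)) * ∑ k ∈ Finset.range (cnt r j), ((k : ℝ) + 1) ^ (-t) ≤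
      (10 / r) ^ (1 - t) / (1 - t) * ((1 - r / 2) ^ ((b - 1) * (1 - t))) ^ j := by
  have hq : 0 < 1 - r / 2 := by linarith [hr.2]
  have hQ : 0 < (1 - r / 2) ^ j := pow_pos hq j
  have hQ1 : (1 - r / 2) ^ j ≤ 1 := pow_le_one₀ hq.le (by linarith [hr.1])
  have hr0 := hr.1
  have h1t : 0 < 1 - t := by linarith
  have hN : (cnt r j : ℝ) ≤ 10 / r * ((1 - r / 2) ^ j)⁻¹ := by
    have h1 : (⌊Real.pi / stp r j⌋₊ : ℝ) ≤ Real.pi / stp r j :=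
      Nat.floor_le (div_nonneg Real.pi_pos.le (stp_pos hr j).le)
    have h2 : Real.pi / stp r j ≤ 4 / stp r j := by
      have := stp_pos hr j
      gcongr
      exact Real.pi_lt_four.le
    have h3 : 4 / stp r j = 8 / r * ((1 - r / 2) ^ j)⁻¹ := by
      unfold stp
      field_simp
      norm_num
    have h4 : 1 ≤ 2 / r * ((1 - r / 2) ^ j)⁻¹ := by
      have e1 : 1 ≤ 2 / r := by rw [le_div_iff₀ hr0]; linarith [hr.2]
      exact one_le_mul_of_one_le_of_one_le e1 ((one_le_inv₀ hQ).2 hQ1)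
    have h5 : 10 / r * ((1 - r / 2) ^ j)⁻¹ =
        8 / r * ((1 - r / 2) ^ j)⁻¹ + 2 / r * ((1 - r / 2) ^ j)⁻¹ := by ring
    unfold cnt
    push_cast
    linarith
  have hN2 : (cnt r j : ℝ) ^ (1 - t) ≤ (10 / r) ^ (1 - t) * ((1 - r / 2) ^ j) ^ (-(1 - t)) := by
    refine (Real.rpow_le_rpow (by positivity) hN h1t.le).trans_eq ?_
    rw [Real.mul_rpow (by positivity) (by positivity), Real.inv_rpow hQ.le, Real.rpow_neg hQ.le]
  have hρ : ((1 - r / 2) ^ ((b - 1) * (1 - t))) ^ j =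
      ((1 - r / 2) ^ j) ^ (b * (1 - t)) * ((1 - r / 2) ^ j) ^ (-(1 - t)) := by
    rw [← Real.rpow_add hQ, ← Real.rpow_natCast, ← Real.rpow_natCast, ← Real.rpow_mul hq.le,
      ← Real.rpow_mul hq.le]
    congr 1
    ring
  calc _ ≤ ((1 - r / 2) ^ j) ^ (b * (1 - t)) *
        ((10 / r) ^ (1 - t) * ((1 - r / 2) ^ j) ^ (-(1 - t)) / (1 - t)) := by
        refine mul_le_mul_of_nonneg_left ((sum_rpow_le ht0 ht1 _).trans ?_) (by positivity)
        gcongr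
    _ = _ := by rw [hρ]; ring

/-! ### The integral estimate -/

/-- The pseudohyperbolic disks around the images `φ_z(v)` of the lattice points cover the unit
disk; moreover the disk containing `u` can be chosen so that the base of the test function at `u`
is controlled by `|1 - z̄ v|`. -/
lemma exists_lat_mob {r : ℝ} (hr : r ∈ Set.Ioo (0 : ℝ) 1) {e z u : ℂ} (he : ‖e‖ = 1)
    (hz : ‖z‖ < 1) (hu : ‖u‖ < 1) :
    ∃ j k s, k < cnt r j ∧ u ∈ pD (mob z (lat r e j k s)) r ∧
      (1 - ‖z‖ ^ 2) / ‖1 - (starRingEnd ℂ) z * u‖ ≤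
        2 * ‖1 - (starRingEnd ℂ) z * lat r e j k s‖ := by
  have hv := norm_mob_lt hz hu
  obtain ⟨j, k, s, hk, hlt⟩ := exists_lat hr he hv
  have hQ : 0 < (1 - r / 2) ^ j := pow_pos (by linarith [hr.2]) _
  have hl := norm_lat hr he j k s
  have hl1 : ‖lat r e j k s‖ < 1 := by linarith
  have hlow := one_sub_norm_le (z := lat r e j k s) hv.le
  refine ⟨j, k, s, hk, ⟨by simpa using hu, ?_⟩, ?_⟩
  · have h1 : ‖mob (mob z (lat r e j k s)) (mob z (mob z u))‖ < r := by
      rw [norm_mob_mob hz hl1 hv, mob, norm_div, div_lt_iff₀ (by linarith)]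
      refine hlt.trans_le (mul_le_mul_of_nonneg_left ?_ hr.1.le)
      linarith
    rw [mob_mob hz hu] at h1
    exact h1
  · have h1 : (1 - ‖z‖ ^ 2) / ‖1 - (starRingEnd ℂ) z * u‖ =
        ‖1 - (starRingEnd ℂ) z * mob z u‖ := by
      rw [one_sub_conj_mul_mob hz hu, norm_div, norm_one_sub_conj_mul_self hz]
    have h2 : 1 - (starRingEnd ℂ) z * mob z u = (1 - (starRingEnd ℂ) z * lat r e j k s) +
        (starRingEnd ℂ) z * (lat r e j k s - mob z u) := by ring
    have hY : (1 - r / 2) ^ j ≤ ‖1 - (starRingEnd ℂ) z * lat r e j k s‖ := by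
      have h3 := norm_sub_norm_le (1 : ℂ) ((starRingEnd ℂ) z * lat r e j k s)
      rw [norm_one, norm_mul, RCLike.norm_conj, hl] at h3
      nlinarith [norm_nonneg (lat r e j k s), norm_nonneg z]
    rw [h1, h2]
    refine (norm_add_le _ _).trans ?_
    rw [norm_mul, RCLike.norm_conj]
    have h4 : ‖z‖ * ‖lat r e j k s - mob z u‖ ≤ 1 * (1 * (1 - r / 2) ^ j) := by
      refine mul_le_mul hz.le (hlt.le.trans ?_) (norm_nonneg _) (by norm_num)
      exact mul_le_mul_of_nonneg_right hr.2.le hQ.le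
    linarith

/-- The `L¹(μ)` estimate of `|g_z|`, for the reduced exponent `b (2 - t)` with `0 ≤ t < 1`. -/
lemma lintegral_test_le {b t r C : ℝ} (hb : 1 < b) (ht0 : 0 ≤ t) (ht1 : t < 1)
    (hr : r ∈ Set.Ioo (0 : ℝ) 1) (hC : 0 ≤ C) (μ : Measure ℂ)
    (hμ : ∀ w ∈ ball (0 : ℂ) 1, μ (pD w r) ≤ ENNReal.ofReal (C * (1 - ‖w‖ ^ 2) ^ b)) :
    ∃ M : ℝ, 0 ≤ M ∧ ∀ z : ℂ, ‖z‖ < 1 →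
      ∫⁻ u in ball (0 : ℂ) 1,
        ENNReal.ofReal (((1 - ‖z‖ ^ 2) / ‖1 - (starRingEnd ℂ) z * u‖) ^ (b * (2 - t))) ∂μ ≤
      ENNReal.ofReal (M * (1 - ‖z‖) ^ b) := by
  have hr0 := hr.1
  have h1t : 0 < 1 - t := by linarith
  have hq : 0 < 1 - r / 2 := by linarith [hr.2]
  set ρ : ℝ := (1 - r / 2) ^ ((b - 1) * (1 - t)) with hρ
  have hρ0 : 0 ≤ ρ := Real.rpow_nonneg hq.le _
  have hρ1 : ρ < 1 := Real.rpow_lt_one hq.le (by linarith) (mul_pos (by linarith) h1t)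
  set M₁ : ℝ := 2 ^ (b * (2 - t)) * 4 ^ b * (r / 2 / 5) ^ (-t) with hM₁
  have hM₁0 : 0 ≤ M₁ := by positivity
  set M₂ : ℝ := C * M₁ * 2 * ((10 / r) ^ (1 - t) / (1 - t)) with hM₂
  have hM₂0 : 0 ≤ M₂ := by positivity
  refine ⟨M₂ * (1 - ρ)⁻¹, mul_nonneg hM₂0 (inv_nonneg.2 (by linarith)), fun z hz => ?_⟩
  set e : ℂ := exp ((arg z : ℂ) * I) with he_def
  have he : ‖e‖ = 1 := Complex.norm_exp_ofReal_mul_I _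
  have hd : 0 ≤ 1 - ‖z‖ := by linarith
  let Y : ℕ → ℕ → Bool → ℝ := fun j k s => ‖1 - (starRingEnd ℂ) z * lat r e j k s‖
  let D : ℕ → ℕ → Bool → Set ℂ := fun j k s => pD (mob z (lat r e j k s)) r
  let m : ℕ → ℕ → Bool → ℝ≥0∞ := fun j k s => ENNReal.ofReal ((2 * Y j k s) ^ (b * (2 - t)))
  have hpt : ∀ u ∈ ball (0 : ℂ) 1,
      ENNReal.ofReal (((1 - ‖z‖ ^ 2) / ‖1 - (starRingEnd ℂ) z * u‖) ^ (b * (2 - t))) ≤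
      ∑' i : (Σ j, Fin (cnt r j) × Bool),
        (D i.1 i.2.1 i.2.2).indicator (fun _ => m i.1 i.2.1 i.2.2) u := by
    intro u hu
    rw [mem_ball_zero_iff] at hu
    obtain ⟨j, k, s, hk, hmem, hle⟩ := exists_lat_mob hr he hz hu
    refine le_trans ?_ (ENNReal.le_tsum (⟨j, ⟨k, hk⟩, s⟩ : Σ j, Fin (cnt r j) × Bool))
    rw [Set.indicator_of_mem (show u ∈ D j k s from hmem)]
    refine ENNReal.ofReal_le_ofReal (Real.rpow_le_rpow ?_ hle ?_)
    · exact div_nonneg (by nlinarith [norm_nonneg z]) (norm_nonneg _)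
    · exact mul_nonneg (by linarith) (by linarith)
  have hterm : ∀ j k s, k < cnt r j → m j k s * μ (D j k s) ≤
      ENNReal.ofReal (C * M₁ * (1 - ‖z‖) ^ b *
        (((1 - r / 2) ^ j) ^ (b * (1 - t)) * ((k : ℝ) + 1) ^ (-t))) := by
    intro j k s hk
    have hQ : 0 < (1 - r / 2) ^ j := pow_pos hq j
    have hl := norm_lat hr he j k s
    have hl1 : ‖lat r e j k s‖ < 1 := by linarith
    have hQY : (1 - r / 2) ^ j ≤ Y j k s := by
      have h3 := norm_sub_norm_le (1 : ℂ) ((starRingEnd ℂ) z * lat r e j k s)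
      rw [norm_one, norm_mul, RCLike.norm_conj, hl] at h3
      have h4 := norm_nonneg (lat r e j k s)
      rw [hl] at h4
      change _ ≤ ‖_‖
      nlinarith [norm_nonneg z]
    have hY0 : 0 < Y j k s := hQ.trans_le hQY
    have hkY : ((k : ℝ) + 1) * (r / 2 * (1 - r / 2) ^ j) ≤ 5 * Y j k s :=
      succ_mul_stp_le hr hz hk s
    have hmass : (1 - ‖mob z (lat r e j k s)‖ ^ 2) ^ b ≤
        (4 * (1 - ‖z‖) * (1 - r / 2) ^ j / Y j k s ^ 2) ^ b := by
      have hw := norm_mob_lt hz hl1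
      refine Real.rpow_le_rpow (by nlinarith [norm_nonneg (mob z (lat r e j k s))]) ?_
        (by linarith)
      rw [one_sub_norm_mob_sq hz hl1]
      have h1 : 1 - ‖z‖ ^ 2 ≤ 2 * (1 - ‖z‖) := by nlinarith [norm_nonneg z]
      have h2 : 1 - ‖lat r e j k s‖ ^ 2 ≤ 2 * (1 - r / 2) ^ j := by
        rw [hl]
        nlinarith [sq_nonneg ((1 - r / 2) ^ j)]
      have h3 : 0 ≤ 1 - ‖lat r e j k s‖ ^ 2 := by nlinarith [norm_nonneg (lat r e j k s)]
      refine div_le_div_of_nonneg_right ?_ (sq_nonneg _)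
      refine (mul_le_mul h1 h2 h3 (by linarith)).trans_eq (by ring)
    calc m j k s * μ (D j k s)
        ≤ ENNReal.ofReal ((2 * Y j k s) ^ (b * (2 - t))) *
          ENNReal.ofReal (C * (1 - ‖mob z (lat r e j k s)‖ ^ 2) ^ b) := by
          refine mul_le_mul_right (hμ _ ?_) _
          rw [mem_ball_zero_iff]
          exact norm_mob_lt hz hl1
      _ ≤ _ := by
          rw [← ENNReal.ofReal_mul (by positivity)]
          refine ENNReal.ofReal_le_ofReal ?_
          have hmain := term_le (b := b) (t := t) (η := r / 2) (d := 1 - ‖z‖)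
            (Q := (1 - r / 2) ^ j) (Y := Y j k s) (κ := (k : ℝ) + 1) hb ht0 (by linarith) hd hQ
            hQY (by positivity) hkY
          calc _ ≤ (2 * Y j k s) ^ (b * (2 - t)) *
                (C * (4 * (1 - ‖z‖) * (1 - r / 2) ^ j / Y j k s ^ 2) ^ b) := by gcongr
            _ = C * ((2 * Y j k s) ^ (b * (2 - t)) *
                (4 * (1 - ‖z‖) * (1 - r / 2) ^ j / Y j k s ^ 2) ^ b) := by ring
            _ ≤ _ := mul_le_mul_of_nonneg_left hmain hC
            _ = _ := by rw [hM₁]; ring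
  have hlevel : ∀ j, ∑' x : Fin (cnt r j) × Bool, m j x.1 x.2 * μ (D j x.1 x.2) ≤
      ENNReal.ofReal (M₂ * (1 - ‖z‖) ^ b * ρ ^ j) := by
    intro j
    have hQ : 0 < (1 - r / 2) ^ j := pow_pos hq j
    rw [tsum_fintype]
    refine (Finset.sum_le_sum fun x _ => hterm j x.1 x.2 x.1.2).trans ?_
    rw [← ENNReal.ofReal_sum_of_nonneg fun x _ => by positivity]
    refine ENNReal.ofReal_le_ofReal ?_
    rw [← Finset.mul_sum, ← Finset.mul_sum, Fintype.sum_prod_type]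
    simp only [Finset.sum_const, Finset.card_univ, Fintype.card_bool]
    rw [← Finset.smul_sum, Fin.sum_univ_eq_sum_range (fun k => ((k : ℝ) + 1) ^ (-t)), nsmul_eq_mul]
    have h := level_sum_le (b := b) hr ht0 ht1 j
    have h2 := mul_le_mul_of_nonneg_left h
      (show 0 ≤ C * M₁ * (1 - ‖z‖) ^ b * 2 by positivity)
    refine le_trans (le_of_eq ?_) (h2.trans_eq ?_)
    · push_cast
      ring
    · rw [hM₂]
      ring
  calc _ ≤ ∫⁻ u in ball (0 : ℂ) 1, ∑' i : (Σ j, Fin (cnt r j) × Bool),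
        (D i.1 i.2.1 i.2.2).indicator (fun _ => m i.1 i.2.1 i.2.2) u ∂μ :=
        setLIntegral_mono' measurableSet_ball hpt
    _ = ∑' i : (Σ j, Fin (cnt r j) × Bool), m i.1 i.2.1 i.2.2 *
        (μ.restrict (ball 0 1)) (D i.1 i.2.1 i.2.2) := by
        rw [lintegral_tsum fun i =>
          (measurable_const.indicator (measurableSet_pD _ _)).aemeasurable]
        refine tsum_congr fun i => ?_
        exact lintegral_indicator_const (measurableSet_pD _ _) _
    _ ≤ ∑' i : (Σ j, Fin (cnt r j) × Bool), m i.1 i.2.1 i.2.2 * μ (D i.1 i.2.1 i.2.2) := by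
        refine ENNReal.tsum_le_tsum fun i => mul_le_mul_right ?_ _
        exact Measure.restrict_apply_le _ _
    _ = ∑' j, ∑' x : Fin (cnt r j) × Bool, m j x.1 x.2 * μ (D j x.1 x.2) :=
        ENNReal.tsum_sigma (fun j (x : Fin (cnt r j) × Bool) => m j x.1 x.2 * μ (D j x.1 x.2))
    _ ≤ ∑' j, ENNReal.ofReal (M₂ * (1 - ‖z‖) ^ b * ρ ^ j) := ENNReal.tsum_le_tsum hlevel
    _ = _ := by
        rw [← ENNReal.ofReal_tsum_of_nonneg (fun j => by positivity)
          ((summable_geometric_of_lt_one hρ0 hρ1).mul_left _), tsum_mul_left,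
          tsum_geometric_of_lt_one hρ0 hρ1]
        congr 1
        ring

/-- The pointwise bound of the integrand of `Toep μ a (gztest a c z) ζ`, with the exponent of
`|g_z|` lowered to `(a + 2) (2 - t)`. -/
lemma norm_integrand_le {a c t : ℝ} (ha : -1 < a) (hct : 2 - t ≤ c) {z ζ u : ℂ}
    (hz : ‖z‖ < 1) (hζ : ‖ζ‖ < 1) (hu : ‖u‖ < 1) :
    ‖gztest a c z u / (1 - ζ * (starRingEnd ℂ) u) ^ (((2 + a : ℝ)) : ℂ)‖ ≤
      (2 ^ ((a + 2) * (c - (2 - t))) * ((1 - ‖ζ‖) ^ (a + 2))⁻¹) *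
        ((1 - ‖z‖ ^ 2) / ‖1 - (starRingEnd ℂ) z * u‖) ^ ((a + 2) * (2 - t)) := by
  have hz2 : 0 < 1 - ‖z‖ ^ 2 := by nlinarith [norm_nonneg z]
  have hu' := norm_pos_iff.2 (one_sub_conj_mul_ne hz hu.le)
  have hden : 1 - ‖ζ‖ ≤ ‖1 - ζ * (starRingEnd ℂ) u‖ := by
    have := one_sub_norm_le (z := (starRingEnd ℂ) ζ) (u := (starRingEnd ℂ) u)
      (by rw [RCLike.norm_conj]; exact hu.le)
    rwa [Complex.conj_conj, RCLike.norm_conj] at this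
  have hX : 0 < (1 - ‖z‖ ^ 2) / ‖1 - (starRingEnd ℂ) z * u‖ := by positivity
  have hX2 : (1 - ‖z‖ ^ 2) / ‖1 - (starRingEnd ℂ) z * u‖ ≤ 2 := by
    rw [div_le_iff₀ hu']
    have := one_sub_norm_le (z := z) hu.le
    nlinarith [norm_nonneg z]
  have hζ' : 0 < 1 - ‖ζ‖ := by linarith
  rw [norm_div, Complex.norm_cpow_real, gztest, norm_div, Complex.norm_cpow_real,
    Complex.norm_cpow_real, Complex.norm_real, Real.norm_of_nonneg hz2.le,
    ← Real.div_rpow hz2.le hu'.le]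
  set X := (1 - ‖z‖ ^ 2) / ‖1 - (starRingEnd ℂ) z * u‖
  have h1 : X ^ ((a + 2) * c) ≤
      2 ^ ((a + 2) * (c - (2 - t))) * X ^ ((a + 2) * (2 - t)) := by
    rw [show (a + 2) * c = (a + 2) * (c - (2 - t)) + (a + 2) * (2 - t) by ring,
      Real.rpow_add hX]
    refine mul_le_mul_of_nonneg_right (Real.rpow_le_rpow hX.le hX2 ?_) (by positivity)
    exact mul_nonneg (by linarith) (by linarith)
  have h2 : (1 - ‖ζ‖) ^ (a + 2) ≤ ‖1 - ζ * (starRingEnd ℂ) u‖ ^ (2 + a) := by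
    rw [add_comm 2 a]
    exact Real.rpow_le_rpow hζ'.le hden (by linarith)
  calc _ ≤ (2 ^ ((a + 2) * (c - (2 - t))) * X ^ ((a + 2) * (2 - t))) / (1 - ‖ζ‖) ^ (a + 2) := by
        gcongr
    _ = _ := by ring

/-- The quantitative bound: the pointwise estimate of the integrand combined with the `L¹(μ)`
estimate. No integrability is needed, since the norm of a Bochner integral is always at most the
lower integral of the norm. -/
lemma exists_bound {a c : ℝ} (ha : -1 < a) (hc : 1 < c) (μ : Measure ℂ)
    (hμ : ∃ r ∈ Set.Ioo (0 : ℝ) 1, ∃ C : ℝ, ∀ w ∈ ball (0 : ℂ) 1,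
      μ (pD w r) ≤ ENNReal.ofReal (C * (1 - ‖w‖ ^ 2) ^ (a + 2))) :
    ∃ C : ℝ, ∀ z ∈ ball (0 : ℂ) 1, ∀ ζ ∈ ball (0 : ℂ) 1,
        ‖Toep μ a (gztest a c z) ζ‖ ≤ C * ((1 - ‖z‖) / (1 - ‖ζ‖)) ^ (a + 2) := by
  obtain ⟨r, hr, C, hC⟩ := hμ
  have hC' : ∀ w ∈ ball (0 : ℂ) 1,
      μ (pD w r) ≤ ENNReal.ofReal (|C| * (1 - ‖w‖ ^ 2) ^ (a + 2)) := by
    intro w hw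
    refine (hC w hw).trans (ENNReal.ofReal_le_ofReal ?_)
    rw [mem_ball_zero_iff] at hw
    exact mul_le_mul_of_nonneg_right (le_abs_self C)
      (Real.rpow_nonneg (by nlinarith [norm_nonneg w]) _)
  -- The exponent `2 - t = min c 2` lies in `(1, 2]`.
  obtain ⟨t, ht0, ht1, htc⟩ : ∃ t : ℝ, 0 ≤ t ∧ t < 1 ∧ 2 - t ≤ c := by
    refine ⟨2 - min c 2, by linarith [min_le_right c 2], ?_, by linarith [min_le_left c 2]⟩
    have : 1 < min c 2 := lt_min hc (by norm_num)
    linarith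
  obtain ⟨M, hM0, hM⟩ := lintegral_test_le (b := a + 2) (by linarith) ht0 ht1 hr (abs_nonneg C)
    μ hC'
  refine ⟨2 ^ ((a + 2) * (c - (2 - t))) * M, fun z hz ζ hζ => ?_⟩
  rw [mem_ball_zero_iff] at hz hζ
  have hζ' : 0 < 1 - ‖ζ‖ := by linarith
  have hz' : 0 ≤ 1 - ‖z‖ := by linarith
  set K : ℝ := 2 ^ ((a + 2) * (c - (2 - t))) * ((1 - ‖ζ‖) ^ (a + 2))⁻¹ with hK
  have hK0 : 0 ≤ K := by positivity
  have hfin : ‖Toep μ a (gztest a c z) ζ‖ₑ ≤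
      ENNReal.ofReal (K * (M * (1 - ‖z‖) ^ (a + 2))) := by
    rw [Toep]
    refine (enorm_integral_le_lintegral_enorm _).trans ?_
    calc _ ≤ ∫⁻ u in ball (0 : ℂ) 1, ENNReal.ofReal K * ENNReal.ofReal
          (((1 - ‖z‖ ^ 2) / ‖1 - (starRingEnd ℂ) z * u‖) ^ ((a + 2) * (2 - t))) ∂μ := by
          refine setLIntegral_mono' measurableSet_ball fun u hu => ?_
          rw [mem_ball_zero_iff] at hu
          rw [← ENNReal.ofReal_mul hK0, ← ofReal_norm]
          exact ENNReal.ofReal_le_ofReal (norm_integrand_le ha htc hz hζ hu)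
      _ = ENNReal.ofReal K * _ := lintegral_const_mul' _ _ ENNReal.ofReal_ne_top
      _ ≤ _ := by
          rw [ENNReal.ofReal_mul hK0]
          exact mul_le_mul_right (hM z hz) _
  rw [← ofReal_norm, ENNReal.ofReal_le_ofReal_iff (by positivity)] at hfin
  refine hfin.trans_eq ?_
  rw [Real.div_rpow hz' hζ'.le, hK]
  ring

theorem stmt18 (a c : ℝ) (ha : -1 < a) (hc : 1 < c)
    (μ : Measure ℂ)
    (hμ : ∃ r ∈ Set.Ioo (0 : ℝ) 1, ∃ C : ℝ, ∀ w ∈ ball (0 : ℂ) 1,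
      μ (pD w r) ≤ ENNReal.ofReal (C * (1 - ‖w‖ ^ 2) ^ (a + 2))) :
    (∃ C : ℝ, ∀ z ∈ ball (0 : ℂ) 1, ∀ ζ ∈ ball (0 : ℂ) 1,
        ‖Toep μ a (gztest a c z) ζ‖ ≤ C * ((1 - ‖z‖) / (1 - ‖ζ‖)) ^ (a + 2)) ∧
      ∀ ζ ∈ ball (0 : ℂ) 1, ∀ ε > (0 : ℝ), ∃ δ ∈ Set.Ioo (0 : ℝ) 1,
        ∀ z ∈ ball (0 : ℂ) 1, δ < ‖z‖ → ‖Toep μ a (gztest a c z) ζ‖ < ε := by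
  have hbound := exists_bound ha hc μ hμ
  refine ⟨hbound, fun ζ hζ ε hε => ?_⟩
  obtain ⟨C, hC⟩ := hbound
  rw [mem_ball_zero_iff] at hζ
  have hζ' : 0 < 1 - ‖ζ‖ := by linarith
  have hC0 : 0 < max C 1 := lt_max_of_lt_right one_pos
  -- `y` solves `max C 1 * y ^ (a + 2) = ε`.
  set y : ℝ := (ε / max C 1) ^ (a + 2)⁻¹ with hy
  have hy0 : 0 < y := by positivity
  have hpow : y ^ (a + 2) = ε / max C 1 :=
    Real.rpow_inv_rpow (by positivity) (by linarith)
  have hp : 0 < (1 - ‖ζ‖) * y := by positivity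
  refine ⟨1 - min (1 / 2) ((1 - ‖ζ‖) * y), ⟨?_, ?_⟩, fun z hz hδ => ?_⟩
  · linarith [min_le_left (1 / 2) ((1 - ‖ζ‖) * y)]
  · linarith [lt_min (by norm_num : (0 : ℝ) < 1 / 2) hp]
  · refine (hC z hz ζ (by rwa [mem_ball_zero_iff])).trans_lt ?_
    rw [mem_ball_zero_iff] at hz
    have hx0 : 0 ≤ (1 - ‖z‖) / (1 - ‖ζ‖) := div_nonneg (by linarith) hζ'.le
    have hxy : (1 - ‖z‖) / (1 - ‖ζ‖) < y := by
      rw [div_lt_iff₀' hζ']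
      linarith [min_le_right (1 / 2) ((1 - ‖ζ‖) * y)]
    have h1 : ((1 - ‖z‖) / (1 - ‖ζ‖)) ^ (a + 2) < y ^ (a + 2) :=
      Real.rpow_lt_rpow hx0 hxy (by linarith)
    calc _ ≤ max C 1 * ((1 - ‖z‖) / (1 - ‖ζ‖)) ^ (a + 2) :=
          mul_le_mul_of_nonneg_right (le_max_left _ _) (Real.rpow_nonneg hx0 _)
      _ < max C 1 * y ^ (a + 2) := mul_lt_mul_of_pos_left h1 hC0
      _ = ε := by rw [hpow]; field_simp
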